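/- arXiv:1309.1697 — 3 statements merged into one kernel-verified Lean document; each statement's English description precedes it below -/
import Mathlib

section
/- Let a = x₀ < x₁ < ⋯ < x_N = b be a partition of [a,b] with element lengths h_j = x_j − x_{j−1}, h_min = min_j h_j and h_max = max_j h_j, and let v_j : [x_{j−1}, x_j] → ℝ be continuously differentiable for j = 1,…,N. Then the squared Euclidean norm of the interior jumps satisfies ∑_{j=1}^{N−1} (v_{j+1}(x_j) − v_j(x_j))² ≤ (8/h_min)·∑_{j=1}^{N} ∫_{x_{j−1}}^{x_j} v_j(s)² ds + 4·h_max·∑_{j=1}^{N} ∫_{x_{j−1}}^{x_j} v_j′(s)² ds. -/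
open MeasureTheory intervalIntegral

/-- Weighted trace inequality: integrating the derivative of `(s - p) * u s ^ 2` over `[c, d]`
bounds the boundary values of `u`, for every `p ∈ [c, d]`. -/
lemma weighted_trace_inequality {c d p : ℝ} (hp : p ∈ Set.Icc c d) {u u' : ℝ → ℝ}
    (hu : ∀ s ∈ Set.Icc c d, HasDerivWithinAt u (u' s) (Set.Icc c d) s)
    (hu' : ContinuousOn u' (Set.Icc c d)) :
    (d - p) * u d ^ 2 + (p - c) * u c ^ 2
      ≤ 2 * (∫ s in c..d, u s ^ 2) + (d - c) ^ 2 * ∫ s in c..d, u' s ^ 2 := by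
  have hcd : c ≤ d := hp.1.trans hp.2
  have hcont : ContinuousOn u (Set.Icc c d) := fun s hs => (hu s hs).continuousWithinAt
  have hint : ∀ {f : ℝ → ℝ}, ContinuousOn f (Set.Icc c d) → IntervalIntegrable f volume c d :=
    fun hf => hf.intervalIntegrable_of_Icc hcd
  have hderiv : ContinuousOn (fun s => u s ^ 2 + (s - p) * (2 * u s * u' s)) (Set.Icc c d) := by
    fun_prop
  have hftc : ∫ s in c..d, (u s ^ 2 + (s - p) * (2 * u s * u' s))
      = (d - p) * u d ^ 2 - (c - p) * u c ^ 2 := by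
    refine integral_eq_sub_of_hasDerivAt_of_le (f := fun s => (s - p) * u s ^ 2) hcd
      (by fun_prop) (fun s hs => ?_) (hint hderiv)
    have hs' := (hu s (Set.Ioo_subset_Icc_self hs)).hasDerivAt (Icc_mem_nhds hs.1 hs.2)
    exact (((hasDerivAt_id s).sub_const p).mul (hs'.pow 2)).congr_deriv (by simp)
  calc (d - p) * u d ^ 2 + (p - c) * u c ^ 2
      = ∫ s in c..d, (u s ^ 2 + (s - p) * (2 * u s * u' s)) := by rw [hftc]; ring
    _ ≤ ∫ s in c..d, (2 * u s ^ 2 + (d - c) ^ 2 * u' s ^ 2) := by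
      refine integral_mono_on hcd (hint hderiv) (hint (by fun_prop)) fun s hs => ?_
      have hsp : (s - p) ^ 2 ≤ (d - c) ^ 2 :=
        sq_le_sq' (by linarith [hs.1, hp.2]) (by linarith [hs.2, hp.1])
      nlinarith [sq_nonneg (u s - (s - p) * u' s),
        mul_le_mul_of_nonneg_right hsp (sq_nonneg (u' s))]
    _ = 2 * (∫ s in c..d, u s ^ 2) + (d - c) ^ 2 * ∫ s in c..d, u' s ^ 2 := by
      rw [integral_add (hint (by fun_prop)) (hint (by fun_prop)),
        intervalIntegral.integral_const_mul, intervalIntegral.integral_const_mul]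

/-- Scaled trace inequality at both endpoints of `[c, d]`. -/
lemma scaled_trace_inequality {c d : ℝ} (hcd : c < d) {u u' : ℝ → ℝ}
    (hu : ∀ s ∈ Set.Icc c d, HasDerivWithinAt u (u' s) (Set.Icc c d) s)
    (hu' : ContinuousOn u' (Set.Icc c d)) :
    u c ^ 2 + u d ^ 2
      ≤ 4 / (d - c) * (∫ s in c..d, u s ^ 2) + 2 * (d - c) * ∫ s in c..d, u' s ^ 2 := by
  have hh : 0 < d - c := sub_pos.mpr hcd
  have hleft := weighted_trace_inequality (Set.left_mem_Icc.mpr hcd.le) hu hu'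
  have hright := weighted_trace_inequality (Set.right_mem_Icc.mpr hcd.le) hu hu'
  refine le_of_mul_le_mul_left ?_ hh
  calc (d - c) * (u c ^ 2 + u d ^ 2)
      ≤ 4 * (∫ s in c..d, u s ^ 2) + 2 * (d - c) ^ 2 * ∫ s in c..d, u' s ^ 2 := by linarith
    _ = _ := by field_simp

/-- Each nodal contribution is charged to the element it comes from. -/
lemma sum_sub_sq_le_sum_endpoints (N : ℕ) (l r : ℕ → ℝ) :
    ∑ j ∈ Finset.Icc 1 (N - 1), (l (j + 1) - r j) ^ 2
      ≤ ∑ j ∈ Finset.Icc 1 N, 2 * (l j ^ 2 + r j ^ 2) := by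
  have hl : ∑ j ∈ Finset.Icc 1 (N - 1), l (j + 1) ^ 2 ≤ ∑ j ∈ Finset.Icc 1 N, l j ^ 2 := by
    refine (Finset.sum_map (Finset.Icc 1 (N - 1)) (addRightEmbedding 1)
      fun j => l j ^ 2).symm.trans_le ?_
    refine Finset.sum_le_sum_of_subset_of_nonneg (fun j hj => ?_) fun j _ _ => sq_nonneg _
    simp only [Finset.map_add_right_Icc, Finset.mem_Icc] at hj ⊢
    omega
  have hr : ∑ j ∈ Finset.Icc 1 (N - 1), r j ^ 2 ≤ ∑ j ∈ Finset.Icc 1 N, r j ^ 2 :=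
    Finset.sum_le_sum_of_subset_of_nonneg (Finset.Icc_subset_Icc_right (N.sub_le 1))
      fun j _ _ => sq_nonneg _
  calc ∑ j ∈ Finset.Icc 1 (N - 1), (l (j + 1) - r j) ^ 2
      ≤ ∑ j ∈ Finset.Icc 1 (N - 1), 2 * (l (j + 1) ^ 2 + r j ^ 2) :=
        Finset.sum_le_sum fun j _ => by nlinarith [sq_nonneg (l (j + 1) + r j)]
    _ ≤ ∑ j ∈ Finset.Icc 1 N, 2 * (l j ^ 2 + r j ^ 2) := by
      simp only [← Finset.mul_sum, Finset.sum_add_distrib]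
      linarith

/-- Jump estimate for piecewise `C¹` functions on a partition
`a = x₀ < x₁ < ⋯ < x_N = b`: the squared Euclidean norm of the interior jumps
is bounded by `(8/h_min)·‖v‖²_{L²} + 4·h_max·‖v'‖²_{L²(𝒯)}`. -/
theorem jump_estimate_broken_H1
    (N : ℕ) (hN : 1 ≤ N) (a b : ℝ) (x : ℕ → ℝ)
    (ha : x 0 = a) (hb : x N = b)
    (hx : ∀ j, 1 ≤ j → j ≤ N → x (j - 1) < x j)
    (hmin hmax : ℝ)
    (hhmin : hmin = (Finset.Icc 1 N).inf'
      ⟨1, Finset.mem_Icc.mpr ⟨le_refl 1, hN⟩⟩ (fun j => x j - x (j - 1)))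
    (hhmax : hmax = (Finset.Icc 1 N).sup'
      ⟨1, Finset.mem_Icc.mpr ⟨le_refl 1, hN⟩⟩ (fun j => x j - x (j - 1)))
    (v v' : ℕ → ℝ → ℝ)
    (hv : ∀ j, 1 ≤ j → j ≤ N → ∀ s ∈ Set.Icc (x (j - 1)) (x j),
      HasDerivWithinAt (v j) (v' j s) (Set.Icc (x (j - 1)) (x j)) s)
    (hv' : ∀ j, 1 ≤ j → j ≤ N → ContinuousOn (v' j) (Set.Icc (x (j - 1)) (x j))) :
    (∑ j ∈ Finset.Icc 1 (N - 1), (v (j + 1) (x j) - v j (x j)) ^ 2)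
      ≤ (8 / hmin) * (∑ j ∈ Finset.Icc 1 N, ∫ s in (x (j - 1))..(x j), (v j s) ^ 2)
        + 4 * hmax * (∑ j ∈ Finset.Icc 1 N, ∫ s in (x (j - 1))..(x j), (v' j s) ^ 2) := by
  have hmin_pos : 0 < hmin := by
    rw [hhmin]
    refine (Finset.lt_inf'_iff _).mpr fun j hj => ?_
    rw [Finset.mem_Icc] at hj
    exact sub_pos.mpr (hx j hj.1 hj.2)
  refine (sum_sub_sq_le_sum_endpoints N (fun j => v j (x (j - 1))) fun j => v j (x j)).trans ?_
  rw [Finset.mul_sum, Finset.mul_sum, ← Finset.sum_add_distrib]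
  refine Finset.sum_le_sum fun j hj => ?_
  have hmin_le : hmin ≤ x j - x (j - 1) :=
    hhmin.trans_le (Finset.inf'_le (fun j => x j - x (j - 1)) hj)
  have le_hmax : x j - x (j - 1) ≤ hmax :=
    (Finset.le_sup' (fun j => x j - x (j - 1)) hj).trans_eq hhmax.symm
  rw [Finset.mem_Icc] at hj
  have hlt := hx j hj.1 hj.2
  have hI : 0 ≤ ∫ s in x (j - 1)..x j, v j s ^ 2 :=
    integral_nonneg hlt.le fun s _ => sq_nonneg _
  have hI' : 0 ≤ ∫ s in x (j - 1)..x j, v' j s ^ 2 :=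
    integral_nonneg hlt.le fun s _ => sq_nonneg _
  calc 2 * (v j (x (j - 1)) ^ 2 + v j (x j) ^ 2)
      ≤ 2 * (4 / (x j - x (j - 1)) * (∫ s in x (j - 1)..x j, v j s ^ 2)
          + 2 * (x j - x (j - 1)) * ∫ s in x (j - 1)..x j, v' j s ^ 2) :=
        mul_le_mul_of_nonneg_left
          (scaled_trace_inequality hlt (hv j hj.1 hj.2) (hv' j hj.1 hj.2)) zero_le_two
    _ = 8 / (x j - x (j - 1)) * (∫ s in x (j - 1)..x j, v j s ^ 2)
          + 4 * (x j - x (j - 1)) * ∫ s in x (j - 1)..x j, v' j s ^ 2 := by ring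
    _ ≤ _ := by gcongr
end

section
/- Let a = x₀ < x₁ < ⋯ < x_N = b be a partition of [a,b] with element lengths h_j = x_j − x_{j−1} and h_max = max_j h_j, and let v_j : [x_{j−1}, x_j] → ℝ be continuously differentiable for j = 1,…,N. Then ∑_{j=1}^{N} ∫_{x_{j−1}}^{x_j} v_j(s)² ds ≤ 2·h_max²·∑_{j=1}^{N} ∫_{x_{j−1}}^{x_j} v_j′(s)² ds + 2·∑_{j=1}^{N} h_j·v_j(x_{j−1})². -/
open MeasureTheory intervalIntegral

/-- Cauchy–Schwarz on an interval, against the constant function `1`. -/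
theorem sq_integral_le_length_mul_integral_sq {g : ℝ → ℝ} {c d : ℝ} (hcd : c ≤ d)
    (hg : ContinuousOn g (Set.Icc c d)) :
    (∫ s in c..d, g s) ^ 2 ≤ (d - c) * ∫ s in c..d, g s ^ 2 := by
  rcases hcd.eq_or_lt with rfl | hlt
  · simp
  rw [← Set.uIcc_of_le hcd] at hg
  have hg1 : IntervalIntegrable g volume c d := hg.intervalIntegrable
  have hg2 : IntervalIntegrable (fun s => g s ^ 2) volume c d := (hg.pow 2).intervalIntegrable
  set I := ∫ s in c..d, g s
  have hexpand : ∫ s in c..d, ((d - c) * g s - I) ^ 2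
      = (d - c) ^ 2 * (∫ s in c..d, g s ^ 2) - 2 * (d - c) * I * I + (d - c) * I ^ 2 := by
    have hpt : ∀ s, ((d - c) * g s - I) ^ 2
        = (d - c) ^ 2 * g s ^ 2 - 2 * (d - c) * I * g s + I ^ 2 := fun s => by ring
    simp_rw [hpt]
    rw [integral_add ((hg2.const_mul _).sub (hg1.const_mul _)) intervalIntegrable_const,
      integral_sub (hg2.const_mul _) (hg1.const_mul _),
      intervalIntegral.integral_const_mul, intervalIntegral.integral_const_mul,
      intervalIntegral.integral_const, smul_eq_mul]
  have hnonneg : 0 ≤ ∫ s in c..d, ((d - c) * g s - I) ^ 2 :=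
    integral_nonneg hcd fun s _ => sq_nonneg _
  rw [hexpand] at hnonneg
  have hpos : 0 < d - c := sub_pos.mpr hlt
  refine le_of_mul_le_mul_left ?_ hpos
  linarith

/-- Poincaré–Friedrichs estimate on a single interval, with the left endpoint value. -/
theorem integral_sq_le_of_hasDerivWithinAt {f f' : ℝ → ℝ} {c d : ℝ} (hcd : c ≤ d)
    (hf : ∀ s ∈ Set.Icc c d, HasDerivWithinAt f (f' s) (Set.Icc c d) s)
    (hf' : ContinuousOn f' (Set.Icc c d)) :
    ∫ s in c..d, f s ^ 2
      ≤ 2 * (d - c) ^ 2 * (∫ s in c..d, f' s ^ 2) + 2 * ((d - c) * f c ^ 2) := by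
  have hcont : ContinuousOn f (Set.Icc c d) := fun s hs => (hf s hs).continuousWithinAt
  set Q := ∫ s in c..d, f' s ^ 2
  have hbound : ∀ s ∈ Set.Icc c d, f s ^ 2 ≤ 2 * (d - c) * Q + 2 * f c ^ 2 := by
    intro s hs
    have hsub : Set.Icc c s ⊆ Set.Icc c d := Set.Icc_subset_Icc_right hs.2
    have hftc : ∫ t in c..s, f' t = f s - f c :=
      integral_eq_sub_of_hasDerivAt_of_le hs.1 (hcont.mono hsub)
        (fun t ht => (hf t ⟨ht.1.le, ht.2.le.trans hs.2⟩).hasDerivAt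
          (Icc_mem_nhds ht.1 (ht.2.trans_le hs.2)))
        ((hf'.mono hsub).intervalIntegrable_of_Icc hs.1)
    have hcs := sq_integral_le_length_mul_integral_sq hs.1 (hf'.mono hsub)
    have hmono : ∫ t in c..s, f' t ^ 2 ≤ Q :=
      integral_mono_interval le_rfl hs.1 hs.2 (ae_of_all _ fun t => sq_nonneg (f' t))
        ((hf'.pow 2).intervalIntegrable_of_Icc hcd)
    have hQ : 0 ≤ Q := integral_nonneg hcd fun t _ => sq_nonneg _
    have hle : (s - c) * (∫ t in c..s, f' t ^ 2) ≤ (d - c) * Q :=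
      (mul_le_mul_of_nonneg_left hmono (sub_nonneg.mpr hs.1)).trans
        (mul_le_mul_of_nonneg_right (sub_le_sub_right hs.2 c) hQ)
    rw [hftc] at hcs
    nlinarith [sq_nonneg (f s - 2 * f c)]
  calc ∫ s in c..d, f s ^ 2 ≤ ∫ _ in c..d, (2 * (d - c) * Q + 2 * f c ^ 2) :=
        integral_mono_on hcd ((hcont.pow 2).intervalIntegrable_of_Icc hcd)
          intervalIntegrable_const hbound
    _ = 2 * (d - c) ^ 2 * Q + 2 * ((d - c) * f c ^ 2) := by
        rw [intervalIntegral.integral_const, smul_eq_mul]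
        ring

/-- Broken Poincaré–Friedrichs estimate for piecewise `C¹` functions on a
partition `a = x₀ < x₁ < ⋯ < x_N = b`:
`‖v‖²_{L²} ≤ 2·h_max²·‖v'‖²_{L²(𝒯)} + 2·|v̂|_h²`, where
`|v̂|_h² = ∑_j h_j·v_j(x_{j−1})²`. -/
theorem broken_poincare_friedrichs
    (N : ℕ) (hN : 1 ≤ N) (a b : ℝ) (x : ℕ → ℝ)
    (ha : x 0 = a) (hb : x N = b)
    (hx : ∀ j, 1 ≤ j → j ≤ N → x (j - 1) < x j)
    (hmax : ℝ)
    (hhmax : hmax = (Finset.Icc 1 N).sup'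
      ⟨1, Finset.mem_Icc.mpr ⟨le_refl 1, hN⟩⟩ (fun j => x j - x (j - 1)))
    (v v' : ℕ → ℝ → ℝ)
    (hv : ∀ j, 1 ≤ j → j ≤ N → ∀ s ∈ Set.Icc (x (j - 1)) (x j),
      HasDerivWithinAt (v j) (v' j s) (Set.Icc (x (j - 1)) (x j)) s)
    (hv' : ∀ j, 1 ≤ j → j ≤ N → ContinuousOn (v' j) (Set.Icc (x (j - 1)) (x j))) :
    (∑ j ∈ Finset.Icc 1 N, ∫ s in (x (j - 1))..(x j), (v j s) ^ 2)
      ≤ 2 * hmax ^ 2 * (∑ j ∈ Finset.Icc 1 N, ∫ s in (x (j - 1))..(x j), (v' j s) ^ 2)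
        + 2 * (∑ j ∈ Finset.Icc 1 N, (x j - x (j - 1)) * (v j (x (j - 1))) ^ 2) := by
  rw [Finset.mul_sum, Finset.mul_sum, ← Finset.sum_add_distrib]
  refine Finset.sum_le_sum fun j hj => ?_
  obtain ⟨hj1, hjN⟩ := Finset.mem_Icc.mp hj
  have hlt := hx j hj1 hjN
  have hle : x j - x (j - 1) ≤ hmax :=
    hhmax ▸ Finset.le_sup' (fun j => x j - x (j - 1)) hj
  have hQ : 0 ≤ ∫ s in (x (j - 1))..(x j), (v' j s) ^ 2 :=
    integral_nonneg hlt.le fun s _ => sq_nonneg _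
  have hsq : (x j - x (j - 1)) ^ 2 ≤ hmax ^ 2 :=
    pow_le_pow_left₀ (sub_nonneg.mpr hlt.le) hle 2
  refine (integral_sq_le_of_hasDerivWithinAt hlt.le (hv j hj1 hjN) (hv' j hj1 hjN)).trans ?_
  gcongr
end

section
/- Let a = x₀ < x₁ < ⋯ < x_N = b be a partition of [a,b] with element lengths h_j = x_j − x_{j−1} and h_max = max_j h_j, and let v_j : [x_{j−1}, x_j] → ℝ be continuously differentiable for j = 1,…,N. Then ∑_{j=1}^{N} h_j·v_j(x_{j−1})² ≤ 2·∑_{j=1}^{N} ∫_{x_{j−1}}^{x_j} v_j(s)² ds + h_max²·∑_{j=1}^{N} ∫_{x_{j−1}}^{x_j} v_j′(s)² ds. -/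
open MeasureTheory intervalIntegral

/-- Endpoint trace estimate on a single interval, obtained by integrating the derivative of
`s ↦ (s - q) * f s ^ 2`. -/
lemma length_mul_sq_left_le {p q : ℝ} (hpq : p ≤ q) {f f' : ℝ → ℝ}
    (hf : ∀ s ∈ Set.Icc p q, HasDerivWithinAt f (f' s) (Set.Icc p q) s)
    (hf' : ContinuousOn f' (Set.Icc p q)) :
    (q - p) * f p ^ 2 ≤ 2 * (∫ s in p..q, f s ^ 2) + (q - p) ^ 2 * ∫ s in p..q, f' s ^ 2 := by
  have hfc : ContinuousOn f (Set.Icc p q) := fun s hs => (hf s hs).continuousWithinAt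
  have hint : ∀ {g : ℝ → ℝ}, ContinuousOn g (Set.Icc p q) → IntervalIntegrable g volume p q :=
    fun hg => hg.intervalIntegrable_of_Icc hpq
  have hF' : ContinuousOn (fun s => f s ^ 2 + 2 * (s - q) * (f s * f' s)) (Set.Icc p q) := by
    fun_prop
  have hftc : ∫ s in p..q, (f s ^ 2 + 2 * (s - q) * (f s * f' s)) = (q - p) * f p ^ 2 := by
    rw [integral_eq_sub_of_hasDerivAt_of_le (f := fun s => (s - q) * f s ^ 2) hpq
      (by fun_prop) _ (hint hF')]
    · ring
    · intro s hs
      have hd := (hf s (Set.Ioo_subset_Icc_self hs)).hasDerivAt (Icc_mem_nhds hs.1 hs.2)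
      refine (((hasDerivAt_id' s).sub_const q).fun_mul (hd.fun_pow 2)).congr_deriv ?_
      norm_num
      ring
  have hsq : IntervalIntegrable (fun s => 2 * f s ^ 2) volume p q := hint (by fun_prop)
  have hsq' : IntervalIntegrable (fun s => (q - p) ^ 2 * f' s ^ 2) volume p q :=
    hint (by fun_prop)
  rw [← hftc, ← intervalIntegral.integral_const_mul, ← intervalIntegral.integral_const_mul,
    ← intervalIntegral.integral_add hsq hsq']
  refine integral_mono_on hpq (hint hF') (hsq.add hsq') fun s hs => ?_
  have hle : (s - q) ^ 2 ≤ (q - p) ^ 2 :=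
    sq_le_sq' (by linarith [hs.1]) (by linarith [hs.1, hs.2])
  nlinarith [sq_nonneg (f s - (s - q) * f' s), mul_le_mul_of_nonneg_right hle (sq_nonneg (f' s))]

/-- Converse nodal-value estimate for piecewise `C¹` functions on a partition
`a = x₀ < x₁ < ⋯ < x_N = b`:
`|v̂|_h² ≤ 2·‖v‖²_{L²} + h_max²·‖v'‖²_{L²(𝒯)}`, where
`|v̂|_h² = ∑_j h_j·v_j(x_{j−1})²`. -/
theorem nodal_values_le_broken_H1
    (N : ℕ) (hN : 1 ≤ N) (a b : ℝ) (x : ℕ → ℝ)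
    (ha : x 0 = a) (hb : x N = b)
    (hx : ∀ j, 1 ≤ j → j ≤ N → x (j - 1) < x j)
    (hmax : ℝ)
    (hhmax : hmax = (Finset.Icc 1 N).sup'
      ⟨1, Finset.mem_Icc.mpr ⟨le_refl 1, hN⟩⟩ (fun j => x j - x (j - 1)))
    (v v' : ℕ → ℝ → ℝ)
    (hv : ∀ j, 1 ≤ j → j ≤ N → ∀ s ∈ Set.Icc (x (j - 1)) (x j),
      HasDerivWithinAt (v j) (v' j s) (Set.Icc (x (j - 1)) (x j)) s)
    (hv' : ∀ j, 1 ≤ j → j ≤ N → ContinuousOn (v' j) (Set.Icc (x (j - 1)) (x j))) :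
    (∑ j ∈ Finset.Icc 1 N, (x j - x (j - 1)) * (v j (x (j - 1))) ^ 2)
      ≤ 2 * (∑ j ∈ Finset.Icc 1 N, ∫ s in (x (j - 1))..(x j), (v j s) ^ 2)
        + hmax ^ 2 * (∑ j ∈ Finset.Icc 1 N, ∫ s in (x (j - 1))..(x j), (v' j s) ^ 2) := by
  rw [Finset.mul_sum, Finset.mul_sum, ← Finset.sum_add_distrib]
  refine Finset.sum_le_sum fun j hj => ?_
  obtain ⟨hj1, hjN⟩ := Finset.mem_Icc.mp hj
  have hlt := hx j hj1 hjN
  have hle : x j - x (j - 1) ≤ hmax :=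
    hhmax ▸ Finset.le_sup' (fun j => x j - x (j - 1)) hj
  refine (length_mul_sq_left_le hlt.le (hv j hj1 hjN) (hv' j hj1 hjN)).trans ?_
  have hnonneg : 0 ≤ ∫ s in (x (j - 1))..(x j), (v' j s) ^ 2 :=
    integral_nonneg hlt.le fun s _ => sq_nonneg _
  have hpos : 0 ≤ x j - x (j - 1) := sub_nonneg.mpr hlt.le
  gcongr
end
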